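/- Let D ⊆ Δ⁺ be a basic subset with diagram as defined and C(D) = {ξ_1 ≻ … ≻ ξ_c}. Fix 1 ≤ i ≤ c and write ξ_i = (s,t). Define Λ_i = {η ∈ Δ⁺ : col(η) ≥ t and w_{i−1}(η) > 0} and T_− = {β ∈ Δ⁺ : row(β) = s, col(β) > t, and w_{i−1}(β) < 0}. Then Λ_i ∪ T_− is closed under addition of roots: if η₁, η₂ ∈ Λ_i ∪ T_− and η₁ + η₂ is a root, then η₁ + η₂ ∈ Λ_i ∪ T_−. Moreover, Λ_i itself is closed under addition of roots. -/

import Mathlib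

/-- A positive root `(i,j)`: `n ≥ i > j ≥ 1`. -/
def IsPosRoot (n : ℕ) (γ : ℕ × ℕ) : Prop := 1 ≤ γ.2 ∧ γ.2 < γ.1 ∧ γ.1 ≤ n

/-- `γ` is the sum of the roots `α` and `β` (in either order):
`(i,j) + (j,k) = (i,k)`. -/
def RootSum (α β γ : ℕ × ℕ) : Prop :=
  (α.2 = β.1 ∧ γ = (α.1, β.2)) ∨ (β.2 = α.1 ∧ γ = (β.1, α.2))

/-- A basic subset: a set of positive roots with at most one root in each
row and at most one root in each column. -/
def IsBasic (n : ℕ) (D : Set (ℕ × ℕ)) : Prop :=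
  (∀ γ ∈ D, IsPosRoot n γ) ∧
  (∀ α ∈ D, ∀ β ∈ D, α.1 = β.1 → α = β) ∧
  (∀ α ∈ D, ∀ β ∈ D, α.2 = β.2 → α = β)

/-- A positive root `α` is `D`-singular if `α + β ∈ D` for some positive root `β`. -/
def IsSingular (n : ℕ) (D : Set (ℕ × ℕ)) (α : ℕ × ℕ) : Prop :=
  IsPosRoot n α ∧ ∃ β γ, IsPosRoot n β ∧ RootSum α β γ ∧ γ ∈ D

/-- `M(D) = R(D) \ D`, where `R(D)` is the set of `D`-regular positive roots. -/
def MD (n : ℕ) (D : Set (ℕ × ℕ)) : Set (ℕ × ℕ) :=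
  {γ | IsPosRoot n γ ∧ ¬ IsSingular n D γ ∧ γ ∉ D}
open scoped Classical

/-- Marks used in the diagram of a basic subset. -/
inductive Mark : Type
  | otimes : Mark
  | plus : Mark
  | minus : Mark
  | bullet : Mark
deriving DecidableEq

/-- A marking state of the diagram: a partial assignment of marks to places. -/
abbrev MState : Type := ℕ × ℕ → Option Mark

/-- Step 0 of the diagram construction: every root of `M(D)` is marked `•`. -/
noncomputable def initMark (n : ℕ) (D : Set (ℕ × ℕ)) : MState :=
  fun γ => if γ ∈ MD n D then some Mark.bullet else none

/-- One step of the diagram construction: mark `ξ` with `⊗`, and for every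
decomposition `ξ = α + β` with `col α = col ξ`, `row β = row ξ` and both
`α`, `β` unmarked, mark `α` with `+` and `β` with `−`. -/
noncomputable def markStep (s : MState) (ξ : ℕ × ℕ) : MState :=
  fun γ =>
    if γ = ξ then some Mark.otimes
    else if γ.2 = ξ.2 ∧ ξ.2 < γ.1 ∧ γ.1 < ξ.1 ∧ s γ = none ∧ s (ξ.1, γ.1) = none then
      some Mark.plus
    else if γ.1 = ξ.1 ∧ ξ.2 < γ.2 ∧ γ.2 < ξ.1 ∧ s γ = none ∧ s (γ.2, ξ.2) = none then
      some Mark.minus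
    else s γ

/-- The list of all positive roots in decreasing order with respect to `≻`
(`(k,m) ≻ (i,j)` iff `m < j`, or `m = j` and `k > i`). -/
def rootList (n : ℕ) : List (ℕ × ℕ) :=
  (List.range n).flatMap (fun j0 =>
    (List.range n).filterMap (fun k =>
      if j0 + 1 < n - k then some (n - k, j0 + 1) else none))

/-- Run the diagram construction along a list of places, recording at each
step `i` the pair (`ξ_i`, state after step `i`). -/
noncomputable def diagRun (s : MState) : List (ℕ × ℕ) → List ((ℕ × ℕ) × MState)
  | [] => []
  | ξ :: rest =>
    if s ξ = none then (ξ, markStep s ξ) :: diagRun (markStep s ξ) rest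
    else diagRun s rest

/-- The full run of the diagram construction for a basic subset `D`. -/
noncomputable def diagSeq (n : ℕ) (D : Set (ℕ × ℕ)) : List ((ℕ × ℕ) × MState) :=
  diagRun (initMark n D) (rootList n)

/-- `c`, the number of steps (= number of `⊗` marks) of the diagram. -/
noncomputable def numSteps (n : ℕ) (D : Set (ℕ × ℕ)) : ℕ := (diagSeq n D).length

/-- `ξ_i`, the root marked `⊗` at step `i` (for `1 ≤ i ≤ c`). -/
noncomputable def xiRoot (n : ℕ) (D : Set (ℕ × ℕ)) (i : ℕ) : ℕ × ℕ :=
  (((diagSeq n D).getD (i - 1) ((0, 0), initMark n D))).1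

/-- The state of the diagram after step `i` (for `0 ≤ i ≤ c`); the state
"before step `i`" is `stateAfter n D (i-1)`. -/
noncomputable def stateAfter (n : ℕ) (D : Set (ℕ × ℕ)) : ℕ → MState
  | 0 => initMark n D
  | i + 1 => (((diagSeq n D).getD i ((0, 0), initMark n D))).2

/-- `C(D)`: the set of roots marked `⊗` on the diagram. -/
noncomputable def CD (n : ℕ) (D : Set (ℕ × ℕ)) : Set (ℕ × ℕ) :=
  {γ | γ ∈ (diagSeq n D).map Prod.fst}

/-- `A_γ`: the set of roots of `C(D)` in the same row as `γ`, strictly to the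
left of `γ`. -/
noncomputable def AD (n : ℕ) (D : Set (ℕ × ℕ)) (γ : ℕ × ℕ) : Set (ℕ × ℕ) :=
  {γ' | γ' ∈ CD n D ∧ γ'.1 = γ.1 ∧ γ'.2 < γ.2}
/-- `w_i = r_{ξ_1} ∘ ⋯ ∘ r_{ξ_i}` as a permutation of `ℕ` (each reflection
`r_{(a,b)}` being the transposition of `a` and `b`). -/
noncomputable def wStep (n : ℕ) (D : Set (ℕ × ℕ)) (i : ℕ) : Equiv.Perm ℕ :=
  (List.range i).foldl
    (fun w k => w * Equiv.swap (xiRoot n D (k + 1)).1 (xiRoot n D (k + 1)).2) 1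

/-- `w(γ) > 0`: the image of the root `γ` under `w` is a positive root. -/
def PosUnder (w : Equiv.Perm ℕ) (γ : ℕ × ℕ) : Prop := w γ.2 < w γ.1

/-- The linear order `≻` on positive roots: `(k,m) ≻ (i,j)` iff `m < j`, or
`m = j` and `k > i`.  `SuccG a b` means `a ≻ b`. -/
def SuccG (a b : ℕ × ℕ) : Prop := a.2 < b.2 ∨ (a.2 = b.2 ∧ b.1 < a.1)

/-- Abstract description of the diagram construction scanned root by root: `r j` is the root
inspected at time `j < N`, `σ j` the marking state and `w j` the product of reflections before
that inspection. -/
structure IsScan (n : ℕ) (D : Set (ℕ × ℕ)) (N : ℕ) (r : ℕ → ℕ × ℕ) (σ : ℕ → MState)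
    (w : ℕ → Equiv.Perm ℕ) : Prop where
  state_zero : σ 0 = initMark n D
  perm_zero : w 0 = 1
  state_succ : ∀ j < N, σ j (r j) = none → σ (j + 1) = markStep (σ j) (r j)
  perm_succ : ∀ j < N, σ j (r j) = none → w (j + 1) = w j * Equiv.swap (r j).1 (r j).2
  state_skip : ∀ j < N, σ j (r j) ≠ none → σ (j + 1) = σ j
  perm_skip : ∀ j < N, σ j (r j) ≠ none → w (j + 1) = w j
  isPosRoot : ∀ j < N, IsPosRoot n (r j)
  succG : ∀ i j, i < j → j < N → SuccG (r i) (r j)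
  exists_time : ∀ γ, IsPosRoot n γ → ∃ j < N, r j = γ

theorem mem_MD_iff {n : ℕ} {D : Set (ℕ × ℕ)} (hD : IsBasic n D) (a b : ℕ) :
    (a, b) ∈ MD n D ↔ IsPosRoot n (a, b) ∧ (∀ k ≤ b, (a, k) ∉ D) ∧ (∀ k, a ≤ k → (k, b) ∉ D) := by
  constructor
  · rintro ⟨hp, hs, hd⟩
    refine ⟨hp, fun k hk hkD => ?_, fun k hk hkD => ?_⟩
    · rcases hk.eq_or_lt with rfl | hk
      · exact hd hkD
      · have := hD.1 _ hkD
        refine hs ⟨hp, (b, k), (a, k), ?_, Or.inl ⟨rfl, rfl⟩, hkD⟩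
        simp only [IsPosRoot] at *; omega
    · rcases hk.eq_or_lt with rfl | hk
      · exact hd hkD
      · have := hD.1 _ hkD
        refine hs ⟨hp, (k, a), (k, b), ?_, Or.inr ⟨rfl, rfl⟩, hkD⟩
        simp only [IsPosRoot] at *; omega
  · rintro ⟨hp, h1, h2⟩
    refine ⟨hp, ?_, h1 b le_rfl⟩
    rintro ⟨-, ⟨x, y⟩, γ, hβ, (⟨h, rfl⟩ | ⟨h, rfl⟩), hγ⟩ <;> simp only [IsPosRoot] at *
    · exact h1 y (by omega) hγ
    · exact h2 x (by omega) hγ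

namespace IsScan

variable {n : ℕ} {D : Set (ℕ × ℕ)} {N : ℕ} {r : ℕ → ℕ × ℕ} {σ : ℕ → MState}
  {w : ℕ → Equiv.Perm ℕ}

theorem succ_eq_none_iff (h : IsScan n D N r σ w) {j s t : ℕ} (hj : j < N) (hr : r j = (s, t))
    (hn : σ j (s, t) = none) (a b : ℕ) :
    σ (j + 1) (a, b) = none ↔ σ j (a, b) = none ∧ ¬(a = s ∧ b = t) ∧
      ¬(b = t ∧ t < a ∧ a < s ∧ σ j (s, a) = none) ∧
      ¬(a = s ∧ t < b ∧ b < s ∧ σ j (b, t) = none) := by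
  rw [h.state_succ j hj (by rw [hr, hn]), hr]
  simp only [markStep, Prod.mk.injEq]
  split_ifs <;> grind

theorem none_mono_succ (h : IsScan n D N r σ w) {j : ℕ} (hj : j < N) {γ : ℕ × ℕ}
    (hγ : σ (j + 1) γ = none) : σ j γ = none := by
  by_cases hn : σ j (r j) = none
  · exact ((h.succ_eq_none_iff hj rfl hn γ.1 γ.2).1 hγ).1
  · rwa [h.state_skip j hj hn] at hγ

theorem none_mono (h : IsScan n D N r σ w) {i j : ℕ} (hij : i ≤ j) (hj : j ≤ N) {γ : ℕ × ℕ}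
    (hγ : σ j γ = none) : σ i γ = none := by
  induction j, hij using Nat.le_induction with
  | base => exact hγ
  | succ j hij ih => exact ih (by omega) (h.none_mono_succ (by omega) hγ)

/-- A marked root that is not in `M(D)` received its mark at an earlier time. -/
theorem exists_marking (h : IsScan n D N r σ w) {j : ℕ} (hj : j ≤ N) {a b : ℕ}
    (hm : σ j (a, b) ≠ none) (hM : (a, b) ∉ MD n D) :
    ∃ i < j, ∃ u t, r i = (u, t) ∧ σ i (u, t) = none ∧ σ i (a, b) = none ∧
      ((a = u ∧ b = t) ∨ (b = t ∧ t < a ∧ a < u ∧ σ i (u, a) = none) ∨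
        (a = u ∧ t < b ∧ b < u ∧ σ i (b, t) = none)) := by
  induction j with
  | zero => exact absurd (by simp [h.state_zero, initMark, hM]) hm
  | succ j ih =>
    by_cases hs : σ j (a, b) = none
    · by_cases hn : σ j (r j) = none
      · refine ⟨j, by omega, (r j).1, (r j).2, rfl, hn, hs, ?_⟩
        have := (h.succ_eq_none_iff (by omega) rfl hn a b).not.1 hm
        tauto
      · rw [h.state_skip j (by omega) hn] at hm
        exact absurd hs hm
    · obtain ⟨i, hi, hrest⟩ := ih (by omega) hs
      exact ⟨i, by omega, hrest⟩

theorem marked_of_mem_MD (h : IsScan n D N r σ w) {j : ℕ} (hj : j ≤ N) {γ : ℕ × ℕ}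
    (hM : γ ∈ MD n D) : σ j γ ≠ none := fun hγ => by
  have := h.none_mono (Nat.zero_le j) hj hγ
  simp [h.state_zero, initMark, hM] at this

theorem marked_of_succG (h : IsScan n D N r σ w) {j : ℕ} (hj : j < N) {γ : ℕ × ℕ}
    (hp : IsPosRoot n γ) (hγ : SuccG γ (r j)) : σ j γ ≠ none := fun hn => by
  obtain ⟨i, hi, rfl⟩ := h.exists_time γ hp
  have hij : i < j := by
    by_contra hle
    rcases (not_lt.1 hle).eq_or_lt with rfl | hlt
    · simp [SuccG] at hγ
    · have := h.succG j i hlt hi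
      simp only [SuccG] at *; omega
  have := (h.succ_eq_none_iff hi rfl (h.none_mono hij.le hj.le hn) _ _).1
    (h.none_mono (show i + 1 ≤ j from hij) hj.le hn)
  exact this.2.1 ⟨rfl, rfl⟩

end IsScan

/-- No root of `D` lies in the column of the root inspected at time `j` in a larger row, provided
the inspected root is unmarked. -/
def ColumnBound (D : Set (ℕ × ℕ)) (r : ℕ → ℕ × ℕ) (σ : ℕ → MState) (j : ℕ) : Prop :=
  ∀ s t, r j = (s, t) → σ j (s, t) = none → ∀ k, s < k → (k, t) ∉ D

/-- At time `j`, in the columns not yet completed, a root is sent to a positive root iff it is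
unmarked or lies in `M(D)`. -/
def SignRule (n : ℕ) (D : Set (ℕ × ℕ)) (r : ℕ → ℕ × ℕ) (σ : MState) (w : Equiv.Perm ℕ)
    (j : ℕ) : Prop :=
  ∀ a b, IsPosRoot n (a, b) → (r j).2 ≤ b → ((σ (a, b) = none ∨ (a, b) ∈ MD n D) ↔ w b < w a)

namespace IsScan

variable {n : ℕ} {D : Set (ℕ × ℕ)} {N : ℕ} {r : ℕ → ℕ × ℕ} {σ : ℕ → MState}
  {w : ℕ → Equiv.Perm ℕ}

theorem not_mem_MD_of_none (h : IsScan n D N r σ w) {j : ℕ} (hj : j ≤ N) {γ : ℕ × ℕ}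
    (hγ : σ j γ = none) : γ ∉ MD n D := fun hM => h.marked_of_mem_MD hj hM hγ

theorem exists_mem_row (h : IsScan n D N r σ w) (hD : IsBasic n D) {j s t : ℕ} (hj : j < N)
    (hC : ColumnBound D r σ j) (hr : r j = (s, t)) (hn : σ j (s, t) = none) :
    ∃ k ≤ t, (s, k) ∈ D := by
  have h1 := h.not_mem_MD_of_none hj.le hn
  have hp := h.isPosRoot j hj
  rw [hr] at hp
  rw [mem_MD_iff hD] at h1
  have h2 := hC s t hr hn
  by_contra hk
  push Not at hk
  refine h1 ⟨hp, hk, fun k hk' hkD => ?_⟩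
  rcases hk'.eq_or_lt with rfl | hlt
  · exact hk t le_rfl hkD
  · exact h2 k hlt hkD

/-- A marked root outside `M(D)` in a column not yet reached got its mark `−` from a root in the
same row. -/
theorem exists_minus (h : IsScan n D N r σ w) {j : ℕ} (hj : j < N) {a b : ℕ}
    (hm : σ j (a, b) ≠ none) (hM : (a, b) ∉ MD n D) (hb : (r j).2 < b) :
    ∃ i < j, ∃ t, r i = (a, t) ∧ σ i (a, t) = none ∧ σ i (a, b) = none ∧ σ i (b, t) = none ∧
      t < b ∧ b < a := by
  obtain ⟨i, hi, u, t, hr, hu, hab, hc⟩ := h.exists_marking hj.le hm hM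
  have := h.succG i j hi hj
  simp only [SuccG, hr] at this
  rcases hc with hc | hc | ⟨rfl, hc⟩
  · omega
  · omega
  · exact ⟨i, hi, t, hr, hu, hab, hc.2.2, hc.1, hc.2.1⟩

theorem columnBound_of_signRule (h : IsScan n D N r σ w) (hD : IsBasic n D) {j : ℕ} (hj : j < N)
    (hC : ∀ i < j, ColumnBound D r σ i) (hS : SignRule n D r (σ j) (w j) j) :
    ColumnBound D r σ j := by
  intro s t hr hn q hq hqD
  have hqp := hD.1 _ hqD
  have hp := h.isPosRoot j hj
  simp only [hr, IsPosRoot] at hp hqp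
  have hqM : (q, t) ∉ MD n D := fun hM => ((mem_MD_iff hD q t).1 hM).2.1 t le_rfl hqD
  have hqsM : (q, s) ∉ MD n D := fun hM => ((mem_MD_iff hD q s).1 hM).2.1 t (by omega) hqD
  have hqm : σ j (q, t) ≠ none := h.marked_of_succG hj hqp (by simp [hr, SuccG, hq])
  have h1 := hS q t hqp (by simp [hr])
  have h2 := hS s t hp (by simp [hr])
  have h3 := hS q s (by simp only [IsPosRoot]; omega) (by simp only [hr]; omega)
  have hqs : σ j (q, s) ≠ none := by
    intro h0
    have := h3.1 (Or.inl h0)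
    have := h2.1 (Or.inl hn)
    exact (h1.2 (by omega)).elim hqm hqM
  obtain ⟨i, hi, m, hri, hqm', hqs', -, hms, -⟩ :=
    h.exists_minus hj hqs hqsM (by simp only [hr]; omega)
  obtain ⟨k, hk, hkD⟩ := h.exists_mem_row hD (by omega) (hC i hi) hri hqm'
  have hkt : k = t := congrArg Prod.snd (hD.2.1 _ hkD _ hqD rfl)
  have := h.succG i j hi hj
  simp only [SuccG, hri, hr] at this
  have hmt : m = t := by omega
  subst hmt
  exact ((h.succ_eq_none_iff (by omega) hri hqm' s m).1
    (h.none_mono (show i + 1 ≤ j from hi) hj.le hn)).2.2.1 ⟨rfl, by omega, hq, hqs'⟩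

/-- When `(k,t)` receives `+` from `(u,t)`, an unmarked root `(s,t)` with `k < s < u` receives `+`
as well, provided the roots of `D` in rows `k` and `s` lie far enough to the right. -/
theorem plus_propagates (h : IsScan n D N r σ w) (hD : IsBasic n D) (j : ℕ) (hj : j < N)
    (hC : ∀ i ≤ j, ColumnBound D r σ i) {u t k s : ℕ} (hr : r j = (u, t))
    (hut : σ j (u, t) = none) (hkt : σ j (k, t) = none) (huk : σ j (u, k) = none)
    (hst : σ j (s, t) = none) (htk : t < k) (hks : k < s) (hsu : s < u)
    (hkD : ∀ x ≤ t, (k, x) ∉ D) (hsD : ∀ x < t, (s, x) ∉ D) : σ j (u, s) = none := by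
  induction j using Nat.strong_induction_on generalizing u t with
  | _ j ih =>
  by_contra hus
  have rowD : ∀ i ≤ j, ∀ a b, r i = (a, b) → σ i (a, b) = none → ∃ k ≤ b, (a, k) ∈ D :=
    fun i hi a b => h.exists_mem_row hD (by omega) (hC i hi)
  obtain ⟨x, hx, hxD⟩ := rowD j le_rfl u t hr hut
  have husM : (u, s) ∉ MD n D := fun hM =>
    ((mem_MD_iff hD u s).1 hM).2.1 x (by omega) hxD
  obtain ⟨i, hi, m, hri, hum, -, hsm, hms, -⟩ :=
    h.exists_minus hj hus husM (by simp only [hr]; omega)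
  have hlt := h.succG i j hi hj
  simp only [SuccG, hri, hr, lt_irrefl, and_false, or_false] at hlt
  have hp := h.isPosRoot i (by omega)
  have hp' := h.isPosRoot j (by omega)
  simp only [hri, hr, IsPosRoot] at hp hp'
  have hsmM := h.not_mem_MD_of_none (show i ≤ N by omega) hsm
  obtain ⟨y, hy, hyD⟩ : ∃ y, s ≤ y ∧ (y, m) ∈ D := by
    by_contra hcon
    push Not at hcon
    exact hsmM ((mem_MD_iff hD s m).2
      ⟨by simp only [IsPosRoot]; omega, fun x hx => hsD x (by omega), hcon⟩)
  have hkmM : (k, m) ∉ MD n D := fun hM =>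
    ((mem_MD_iff hD k m).1 hM).2.2 y (by omega) hyD
  have hkm : σ i (k, m) ≠ none := fun hkm =>
    ((h.succ_eq_none_iff (by omega) hri hum u k).1
      (h.none_mono (show i + 1 ≤ j from hi) hj.le huk)).2.2.2 ⟨rfl, by omega, by omega, hkm⟩
  obtain ⟨i', hi', v, m', hri', hvm, hkm', hcase⟩ := h.exists_marking (by omega) hkm hkmM
  have hlt' := h.succG i' i hi' (by omega)
  simp only [SuccG, hri, hri'] at hlt'
  rcases hcase with hcase | ⟨rfl, hmk, hkv, hvk⟩ | ⟨rfl, hmm, -, -⟩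
  · omega
  · have hsm' := h.none_mono hi'.le (by omega) hsm
    have hvs := ih i' (by omega) (by omega) (fun i hi => hC i (by omega)) hri' hvm hkm' hvk hsm'
      (by omega) (by omega) (fun x hx => hkD x (by omega)) (fun x hx => hsD x (by omega))
    exact ((h.succ_eq_none_iff (by omega) hri' hvm s m).1
      (h.none_mono (show i' + 1 ≤ i from hi') (by omega) hsm)).2.2.1 ⟨rfl, by omega, by omega, hvs⟩
  · obtain ⟨x, hx, hxD⟩ := rowD i' (by omega) _ _ hri' hvm
    exact hkD x (by omega) hxD

/-- Roots of `D` are unmarked when they are inspected. -/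
theorem none_of_mem (h : IsScan n D N r σ w) (hD : IsBasic n D) (j : ℕ) (hj : j < N)
    (hC : ∀ i ≤ j, ColumnBound D r σ i) (hjD : r j ∈ D) : σ j (r j) = none := by
  induction j using Nat.strong_induction_on with
  | _ j ih =>
  by_contra hm
  obtain ⟨s, t, hrj⟩ : ∃ s t, r j = (s, t) := ⟨_, _, rfl⟩
  rw [hrj] at hjD hm
  have hM : (s, t) ∉ MD n D := fun hM => ((mem_MD_iff hD s t).1 hM).2.1 t le_rfl hjD
  obtain ⟨i, hi, u, t', hri, hut, hst, hcase⟩ := h.exists_marking hj.le hm hM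
  have hlt := h.succG i j hi hj
  simp only [SuccG, hri, hrj] at hlt
  obtain ⟨m, hmt, hmD⟩ := h.exists_mem_row hD (by omega) (hC i hi.le) hri hut
  rcases hcase with hcase | ⟨rfl, hts, hsu, hus⟩ | ⟨rfl, htt, -, -⟩
  · omega
  · have hmt' : m ≠ t := by
      rintro rfl
      have := congrArg Prod.fst (hD.2.2 _ hmD _ hjD rfl)
      simp only at this; omega
    have hmp := hD.1 _ hmD
    obtain ⟨i₀, hi₀, hri₀⟩ := h.exists_time _ hmp
    have hi₀i : i₀ < i := by
      by_contra hle
      rcases (not_lt.1 hle).eq_or_lt with rfl | hlt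
      · rw [hri] at hri₀; simp only [Prod.mk.injEq] at hri₀; omega
      · have := h.succG i i₀ hlt hi₀
        simp only [SuccG, hri, hri₀] at this; omega
    have hum := ih i₀ (by omega) hi₀ (fun i hi => hC i (by omega)) (by rw [hri₀]; exact hmD)
    rw [hri₀] at hum
    have hsm : σ i₀ (s, m) ≠ none := fun hsm =>
      ((h.succ_eq_none_iff hi₀ hri₀ hum u s).1
        (h.none_mono (show i₀ + 1 ≤ i from hi₀i) (by omega) hus)).2.2.2
        ⟨rfl, by omega, by omega, hsm⟩
    have hsmM : (s, m) ∉ MD n D := fun hM => ((mem_MD_iff hD s m).1 hM).2.2 u (by omega) hmD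
    have hsD : ∀ x < t, (s, x) ∉ D := fun x hx hxD => by
      have := congrArg Prod.snd (hD.2.1 _ hxD _ hjD rfl)
      simp only at this; omega
    obtain ⟨i₁, hi₁, v, m', hri₁, hvm, hsm₁, hcase⟩ := h.exists_marking hi₀.le hsm hsmM
    have hlt' := h.succG i₁ i₀ hi₁ hi₀
    simp only [SuccG, hri₀, hri₁] at hlt'
    rcases hcase with hcase | ⟨rfl, hms, hsv, hvs⟩ | ⟨rfl, hmm, -, -⟩
    · omega
    · have hvu := h.plus_propagates hD i₁ (by omega) (fun i hi => hC i (by omega)) hri₁ hvm hsm₁ hvs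
        (h.none_mono hi₁.le hi₀.le hum) hms hsu (by omega) (fun x hx => hsD x (by omega))
        (fun x hx hxD => by
          have := congrArg Prod.snd (hD.2.1 _ hxD _ hmD rfl)
          simp only at this; omega)
      exact ((h.succ_eq_none_iff (by omega) hri₁ hvm u m).1
        (h.none_mono (show i₁ + 1 ≤ i₀ from hi₁) hi₀.le hum)).2.2.1
        ⟨rfl, by omega, by omega, hvu⟩
    · obtain ⟨x, hx, hxD⟩ := h.exists_mem_row hD (by omega) (hC i₁ (by omega)) hri₁ hvm
      exact hsD x (by omega) hxD
  · have := congrArg Prod.snd (hD.2.1 _ hmD _ hjD rfl)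
    simp only at this; omega

theorem not_mem_MD_of_none_row (h : IsScan n D N r σ w) (hD : IsBasic n D) {j s t k : ℕ}
    (hj : j < N) (hC : ∀ i ≤ j, ColumnBound D r σ i) (hr : r j = (s, t)) (hn : σ j (s, t) = none)
    (htk : t < k) (hks : k < s) (hsk : σ j (s, k) = none) : (k, t) ∉ MD n D := by
  intro hM
  obtain ⟨-, hkD, htD⟩ := (mem_MD_iff hD k t).1 hM
  obtain ⟨m, hmt, hmD⟩ := h.exists_mem_row hD hj (hC j le_rfl) hr hn
  have hmt' : m ≠ t := fun e => htD s hks.le (e ▸ hmD)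
  obtain ⟨i₀, hi₀, hri₀⟩ := h.exists_time _ (hD.1 _ hmD)
  have hi₀j : i₀ < j := by
    by_contra hle
    rcases (not_lt.1 hle).eq_or_lt with rfl | hlt
    · rw [hr] at hri₀; simp only [Prod.mk.injEq] at hri₀; omega
    · have := h.succG j i₀ hlt hi₀
      simp only [SuccG, hr, hri₀] at this; omega
  have hsm := h.none_of_mem hD i₀ hi₀ (fun i hi => hC i (by omega)) (by rw [hri₀]; exact hmD)
  rw [hri₀] at hsm
  have hkm : σ i₀ (k, m) ≠ none := fun hkm =>
    ((h.succ_eq_none_iff hi₀ hri₀ hsm s k).1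
      (h.none_mono (show i₀ + 1 ≤ j from hi₀j) (by omega) hsk)).2.2.2
      ⟨rfl, by omega, by omega, hkm⟩
  have hkmM : (k, m) ∉ MD n D := fun hM => ((mem_MD_iff hD k m).1 hM).2.2 s (by omega) hmD
  obtain ⟨i₁, hi₁, v, m', hri₁, hvm, hkm₁, hcase⟩ := h.exists_marking hi₀.le hkm hkmM
  have hlt' := h.succG i₁ i₀ hi₁ hi₀
  simp only [SuccG, hri₀, hri₁] at hlt'
  rcases hcase with hcase | ⟨rfl, hmk, hkv, hvk⟩ | ⟨rfl, hmm, -, -⟩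
  · omega
  · have hvs := h.plus_propagates hD i₁ (by omega) (fun i hi => hC i (by omega)) hri₁ hvm hkm₁ hvk
      (h.none_mono hi₁.le hi₀.le hsm) hmk hks (by omega) (fun x hx => hkD x (by omega))
      (fun x hx hxD => by
        have := congrArg Prod.snd (hD.2.1 _ hxD _ hmD rfl)
        simp only at this; omega)
    exact ((h.succ_eq_none_iff (by omega) hri₁ hvm s m).1
      (h.none_mono (show i₁ + 1 ≤ i₀ from hi₁) hi₀.le hsm)).2.2.1
      ⟨rfl, by omega, by omega, hvs⟩
  · obtain ⟨x, hx, hxD⟩ := h.exists_mem_row hD (by omega) (hC i₁ (by omega)) hri₁ hvm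
    exact hkD x (by omega) hxD

/-- If `(a,b)` lies strictly to the right of the current column and is negative, the row `a` of `D`
is occupied to the left of the current column or in it. -/
theorem exists_mem_row_of_neg (h : IsScan n D N r σ w) (hD : IsBasic n D) {j a b : ℕ} (hj : j < N)
    (hC : ∀ i ≤ j, ColumnBound D r σ i) (hS : SignRule n D r (σ j) (w j) j)
    (hp : IsPosRoot n (a, b)) (hb : (r j).2 < b) (hneg : w j a < w j b) :
    ∃ k ≤ (r j).2, (a, k) ∈ D := by
  have h1 := hS a b hp hb.le
  have h2 : ¬ (σ j (a, b) = none ∨ (a, b) ∈ MD n D) := fun hh => by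
    have := h1.1 hh; omega
  push Not at h2
  obtain ⟨i, hi, m, hri, ham, -, -, -, -⟩ := h.exists_minus hj h2.1 h2.2 hb
  obtain ⟨k, hk, hkD⟩ := h.exists_mem_row hD (by omega) (hC i hi.le) hri ham
  have := h.succG i j hi hj
  simp only [SuccG, hri] at this
  exact ⟨k, by omega, hkD⟩

/-- If `(s,t)` is the current unmarked root and `a > s`, then the value at `a` cannot lie above
the value at `t` while `(a,c)` is negative for some `c > t`. -/
theorem not_lt_of_neg (h : IsScan n D N r σ w) (hD : IsBasic n D) {j s t a c : ℕ} (hj : j < N)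
    (hC : ∀ i ≤ j, ColumnBound D r σ i) (hS : SignRule n D r (σ j) (w j) j) (hr : r j = (s, t))
    (hsa : s < a) (htc : t < c) (hp : IsPosRoot n (a, c)) (hneg : w j a < w j c) :
    ¬ w j t < w j a := by
  intro hlt
  have hst := h.isPosRoot j hj
  rw [hr] at hst
  have hpat : IsPosRoot n (a, t) := by simp only [IsPosRoot] at *; omega
  obtain ⟨k, hk, hkD⟩ := h.exists_mem_row_of_neg hD hj hC hS hp (by rw [hr]; exact htc) hneg
  rw [hr] at hk
  have hat := h.marked_of_succG hj hpat (by simp [hr, SuccG, hsa])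
  have hM := ((hS a t hpat (by simp [hr])).2 hlt).resolve_left hat
  exact ((mem_MD_iff hD a t).1 hM).2.1 k hk hkD

theorem signRule_succ (h : IsScan n D N r σ w) (hD : IsBasic n D) {j : ℕ} (hj : j < N)
    (hC : ∀ i ≤ j, ColumnBound D r σ i) (hS : SignRule n D r (σ j) (w j) j) :
    SignRule n D r (σ (j + 1)) (w (j + 1)) j := by
  by_cases hn : σ j (r j) = none
  swap
  · rw [h.state_skip j hj hn, h.perm_skip j hj hn]; exact hS
  obtain ⟨s, t, hr⟩ : ∃ s t, r j = (s, t) := ⟨_, _, rfl⟩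
  rw [hr] at hn
  have hst := h.isPosRoot j hj
  rw [hr] at hst
  have hwp := h.perm_succ j hj (by rw [hr]; exact hn)
  rw [hr] at hwp
  have hlt : w j t < w j s := (hS s t hst (by simp [hr])).1 (Or.inl hn)
  simp only [IsPosRoot] at hst
  have hgap : ∀ k, s < k → k ≤ n → w j t < w j k → w j s < w j k := fun k hk hkn hk' => by
    by_contra hle
    have hne : w j k ≠ w j s := fun e => by have := (w j).injective e; omega
    exact h.not_lt_of_neg hD hj hC hS hr hk hst.2.1 (by simp only [IsPosRoot]; omega)
      (by omega) hk'
  have hcol : ∀ k, t < k → k < s → σ j (s, k) = none → (k, t) ∉ MD n D :=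
    fun k h1 h2 => h.not_mem_MD_of_none_row hD hj hC hr hn h1 h2
  have hrow : ∀ k, t < k → (s, k) ∉ MD n D := fun k hk hM => by
    obtain ⟨m, hm, hmD⟩ := h.exists_mem_row hD hj (hC j le_rfl) hr hn
    exact ((mem_MD_iff hD s k).1 hM).2.1 m (by omega) hmD
  have hmarked : ∀ k, s < k → k ≤ n → σ j (k, t) ≠ none := fun k hk hkn =>
    h.marked_of_succG hj (by simp only [IsPosRoot]; omega) (by simp [hr, SuccG, hk])
  have hstM := h.not_mem_MD_of_none hj.le hn
  intro a b hp hb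
  have hold := hS a b hp hb
  simp only [hr] at hb
  rw [h.succ_eq_none_iff hj hr hn a b, hwp]
  simp only [IsPosRoot] at hp
  simp only [Equiv.Perm.mul_apply]
  have hinj : ∀ x y, w j x = w j y → x = y := fun x y e => (w j).injective e
  have hS' : ∀ a b, 1 ≤ b → b < a → a ≤ n → t ≤ b →
      ((σ j (a, b) = none ∨ (a, b) ∈ MD n D) ↔ w j b < w j a) :=
    fun a b h1 h2 h3 h4 => hS a b ⟨h1, h2, h3⟩ (by rw [hr]; exact h4)
  clear hS hwp hC
  rcases hb.eq_or_lt with rfl | htb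
  · rw [Equiv.swap_apply_right]
    rcases lt_trichotomy a s with has | rfl | has
    · rw [Equiv.swap_apply_of_ne_of_ne (by omega) (by omega)]
      have := hS' s a (by omega) has (by omega) (by omega)
      have := hrow a (by omega)
      have := hcol a (by omega) has
      have := hinj a s
      grind
    · rw [Equiv.swap_apply_left]; grind
    · rw [Equiv.swap_apply_of_ne_of_ne (by omega) (by omega)]
      have := hgap a has (by omega)
      have := hmarked a has (by omega)
      grind
  · rw [Equiv.swap_apply_def s t b, Equiv.swap_apply_def s t a, if_neg (show b ≠ t by omega),
      if_neg (show a ≠ t by omega)]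
    by_cases has : a = s
    · subst has
      rw [if_pos rfl, if_neg (by omega)]
      have := hS' b t (by omega) (by omega) (by omega) (by omega)
      have := hrow b htb
      have := hcol b htb (by omega)
      have := hinj b a
      have := hinj b t
      grind
    · rw [if_neg has]
      by_cases hbs : b = s
      · subst hbs
        rw [if_pos rfl]
        have := hgap a (by omega) (by omega)
        grind
      · rw [if_neg hbs]; grind

theorem signRule_and_columnBound (h : IsScan n D N r σ w) (hD : IsBasic n D) (j : ℕ) (hj : j < N) :
    SignRule n D r (σ j) (w j) j ∧ ∀ i ≤ j, ColumnBound D r σ i := by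
  induction j with
  | zero =>
    have hS : SignRule n D r (σ 0) (w 0) 0 := fun a b hp _ => by
      have := hp.2.1
      by_cases hM : (a, b) ∈ MD n D <;> simp_all [h.state_zero, h.perm_zero, initMark]
    refine ⟨hS, fun i hi => ?_⟩
    obtain rfl : i = 0 := by omega
    exact h.columnBound_of_signRule hD hj (by simp) hS
  | succ j ih =>
    obtain ⟨hS, hC⟩ := ih (by omega)
    have hS' : SignRule n D r (σ (j + 1)) (w (j + 1)) (j + 1) := fun a b hp hb => by
      refine h.signRule_succ hD (by omega) hC hS a b hp (le_trans ?_ hb)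
      have := h.succG j (j + 1) (by omega) hj
      simp only [SuccG] at this
      omega
    refine ⟨hS', fun i hi => ?_⟩
    rcases hi.eq_or_lt with rfl | hi
    · exact h.columnBound_of_signRule hD hj (fun i hi => hC i (by omega)) hS'
    · exact hC i (by omega)

end IsScan

/-- One inspection of a root: it is processed if still unmarked and skipped otherwise. -/
noncomputable def inspect (p : MState × Equiv.Perm ℕ) (ξ : ℕ × ℕ) : MState × Equiv.Perm ℕ :=
  if p.1 ξ = none then (markStep p.1 ξ, p.2 * Equiv.swap ξ.1 ξ.2) else p

/-- The state and the product of reflections after the first `j` roots have been inspected. -/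
noncomputable def scan (n : ℕ) (D : Set (ℕ × ℕ)) (j : ℕ) : MState × Equiv.Perm ℕ :=
  ((rootList n).take j).foldl inspect (initMark n D, 1)

theorem mem_rootList {n : ℕ} {γ : ℕ × ℕ} : γ ∈ rootList n ↔ IsPosRoot n γ := by
  obtain ⟨a, b⟩ := γ
  simp only [rootList, List.mem_flatMap, List.mem_range, List.mem_filterMap,
    Option.ite_none_right_eq_some, Option.some.injEq, Prod.mk.injEq, IsPosRoot]
  constructor
  · rintro ⟨x, hx, y, hy, h1, h2, h3⟩; omega
  · rintro ⟨h1, h2, h3⟩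
    exact ⟨b - 1, by omega, n - a, by omega, by omega, by omega, by omega⟩

theorem pairwise_rootList (n : ℕ) : (rootList n).Pairwise SuccG := by
  rw [rootList, List.pairwise_flatMap]
  constructor
  · intro x hx
    rw [List.pairwise_filterMap]
    refine List.pairwise_lt_range.imp ?_
    intro y z hyz p hp q hq
    simp only [Option.ite_none_right_eq_some, Option.some.injEq] at hp hq
    obtain ⟨h1, rfl⟩ := hp
    obtain ⟨h2, rfl⟩ := hq
    exact Or.inr ⟨rfl, by simp only; omega⟩
  · refine List.pairwise_lt_range.imp ?_
    intro x y hxy p hp q hq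
    simp only [List.mem_filterMap, Option.ite_none_right_eq_some, Option.some.injEq] at hp hq
    obtain ⟨_, _, h1, rfl⟩ := hp
    obtain ⟨_, _, h2, rfl⟩ := hq
    simp only [SuccG]; omega

theorem isScan_scan (n : ℕ) (D : Set (ℕ × ℕ)) :
    IsScan n D (rootList n).length (fun j => (rootList n).getD j (0, 0))
      (fun j => (scan n D j).1) (fun j => (scan n D j).2) := by
  have hsucc : ∀ j < (rootList n).length,
      scan n D (j + 1) = inspect (scan n D j) ((rootList n).getD j (0, 0)) := fun j hj => by
    rw [scan, List.take_add_one, List.getElem?_eq_getElem hj, List.foldl_append,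
      List.getD_eq_getElem _ _ hj]
    rfl
  constructor
  · simp [scan]
  · simp [scan]
  · intro j hj hn
    rw [hsucc j hj, inspect, if_pos hn]
  · intro j hj hn
    rw [hsucc j hj, inspect, if_pos hn]
  · intro j hj hn
    rw [hsucc j hj, inspect, if_neg hn]
  · intro j hj hn
    rw [hsucc j hj, inspect, if_neg hn]
  · intro j hj
    rw [List.getD_eq_getElem _ _ hj, ← mem_rootList]
    exact List.getElem_mem hj
  · intro i j hij hj
    rw [List.getD_eq_getElem _ _ hj, List.getD_eq_getElem _ _ (hij.trans hj)]
    exact List.pairwise_iff_getElem.1 (pairwise_rootList n) i j _ hj hij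
  · intro γ hγ
    obtain ⟨j, hj, rfl⟩ := List.mem_iff_getElem.1 (mem_rootList.2 hγ)
    exact ⟨j, hj, List.getD_eq_getElem _ _ hj⟩

/-- Multiplication by the reflections of the roots recorded in a run of the diagram. -/
noncomputable def mulReflections (w : Equiv.Perm ℕ) (l : List ((ℕ × ℕ) × MState)) :
    Equiv.Perm ℕ :=
  l.foldl (fun w x => w * Equiv.swap x.1.1 x.1.2) w

theorem exists_time_of_diagRun (l : List (ℕ × ℕ)) (p : MState × Equiv.Perm ℕ) (i : ℕ)
    (hi : i < (diagRun p.1 l).length) :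
    ∃ j, ∃ hj : j < l.length, (diagRun p.1 l)[i].1 = l[j] ∧
      ((l.take j).foldl inspect p).1 l[j] = none ∧
      ((l.take j).foldl inspect p).2 = mulReflections p.2 ((diagRun p.1 l).take i) := by
  induction l generalizing p i with
  | nil => simp [diagRun] at hi
  | cons ξ l ih =>
    by_cases hn : p.1 ξ = none
    · have hrun : diagRun p.1 (ξ :: l) = (ξ, markStep p.1 ξ) :: diagRun (inspect p ξ).1 l := by
        simp [diagRun, inspect, hn]
      simp only [hrun] at hi ⊢
      cases i with
      | zero => exact ⟨0, by simp, by simp, by simpa using hn, by simp [mulReflections]⟩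
      | succ i =>
        obtain ⟨j, hj, h1, h2, h3⟩ := ih (inspect p ξ) i (by simpa using hi)
        refine ⟨j + 1, by simpa using hj, by simpa using h1, by simpa using h2, ?_⟩
        simp only [List.take_succ_cons, List.foldl_cons, h3, mulReflections]
        simp [inspect, hn]
    · have hrun : diagRun p.1 (ξ :: l) = diagRun p.1 l := by simp [diagRun, hn]
      have hins : inspect p ξ = p := by simp [inspect, hn]
      simp only [hrun] at hi ⊢
      obtain ⟨j, hj, h1, h2, h3⟩ := ih p i hi
      exact ⟨j + 1, by simpa using hj, by simpa using h1, by simpa [hins] using h2,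
        by simpa [hins] using h3⟩

theorem wStep_eq_mulReflections (n : ℕ) (D : Set (ℕ × ℕ)) (i : ℕ) (hi : i ≤ numSteps n D) :
    wStep n D i = mulReflections 1 ((diagSeq n D).take i) := by
  induction i with
  | zero => simp [wStep, mulReflections]
  | succ i ih =>
    have hi' : i < (diagSeq n D).length := hi
    have h1 : wStep n D (i + 1) =
        wStep n D i * Equiv.swap (xiRoot n D (i + 1)).1 (xiRoot n D (i + 1)).2 := by
      simp [wStep, List.range_succ]
    rw [h1, ih (by omega)]
    rw [mulReflections, mulReflections, List.take_add_one, List.getElem?_eq_getElem hi',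
      List.foldl_append, xiRoot, Nat.add_sub_cancel, List.getD_eq_getElem _ _ hi']
    rfl

theorem exists_scan_time (n : ℕ) (D : Set (ℕ × ℕ)) (i : ℕ) (hi1 : 1 ≤ i)
    (hic : i ≤ numSteps n D) :
    ∃ j < (rootList n).length, (rootList n).getD j (0, 0) = xiRoot n D i ∧
      (scan n D j).1 (xiRoot n D i) = none ∧ (scan n D j).2 = wStep n D (i - 1) := by
  have hi' : i - 1 < (diagSeq n D).length := by unfold numSteps at hic; omega
  obtain ⟨j, hj, h1, h2, h3⟩ := exists_time_of_diagRun (rootList n) (initMark n D, 1) (i - 1) hi'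
  have hx : xiRoot n D i = (rootList n)[j] := by
    rw [← h1, xiRoot, List.getD_eq_getElem _ _ hi']
    rfl
  refine ⟨j, hj, ?_, ?_, ?_⟩
  · rw [hx, List.getD_eq_getElem _ _ hj]
  · rw [hx]; exact h2
  · rw [wStep_eq_mulReflections n D (i - 1) (by omega)]; exact h3

/-- with `ξ_i = (s,t)`, the sets
`Λ_i = {η ∈ Δ⁺ : col η ≥ t, w_{i-1}(η) > 0}` and
`T_- = {β ∈ Δ⁺ : row β = s, col β > t, w_{i-1}(β) < 0}` satisfy:
`Λ_i ∪ T_-` is closed under addition of roots, and so is `Λ_i`. -/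
theorem stmt13 (n : ℕ) (hn : 2 ≤ n) (D : Set (ℕ × ℕ)) (hD : IsBasic n D)
    (i : ℕ) (hi1 : 1 ≤ i) (hic : i ≤ numSteps n D)
    (s t : ℕ) (hst : xiRoot n D i = (s, t))
    (Λi Tm : Set (ℕ × ℕ))
    (hΛ : Λi = {η | IsPosRoot n η ∧ t ≤ η.2 ∧ PosUnder (wStep n D (i - 1)) η})
    (hT : Tm = {β | IsPosRoot n β ∧ β.1 = s ∧ t < β.2 ∧
      ¬ PosUnder (wStep n D (i - 1)) β}) :
    (∀ η₁ ∈ Λi ∪ Tm, ∀ η₂ ∈ Λi ∪ Tm, ∀ γ, RootSum η₁ η₂ γ → γ ∈ Λi ∪ Tm) ∧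
    (∀ η₁ ∈ Λi, ∀ η₂ ∈ Λi, ∀ γ, RootSum η₁ η₂ γ → γ ∈ Λi) := by
  obtain ⟨j, hj, hr, hn, hw⟩ := exists_scan_time n D i hi1 hic
  rw [hst] at hr hn
  have h := isScan_scan n D
  obtain ⟨hS, hC⟩ := h.signRule_and_columnBound hD j hj
  have hp : IsPosRoot n (s, t) := hr ▸ h.isPosRoot j hj
  have hpos := (hS s t hp (congrArg Prod.snd hr).le).1 (Or.inl hn)
  have hgap : ∀ a c, s < a → t < c → IsPosRoot n (a, c) →
      (scan n D j).2 a < (scan n D j).2 c → ¬ (scan n D j).2 t < (scan n D j).2 a :=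
    fun a c h1 h2 => h.not_lt_of_neg hD hj hC hS hr h1 h2
  rw [hw] at hpos hgap
  subst hΛ hT
  generalize wStep n D (i - 1) = v at *
  have hinj : ∀ x y, v x = v y → x = y := fun x y e => v.injective e
  have hclosed : ∀ a b c, (a, b) ∈ {η | IsPosRoot n η ∧ t ≤ η.2 ∧ PosUnder v η} ∪
      {β | IsPosRoot n β ∧ β.1 = s ∧ t < β.2 ∧ ¬ PosUnder v β} →
      (b, c) ∈ {η | IsPosRoot n η ∧ t ≤ η.2 ∧ PosUnder v η} ∪
      {β | IsPosRoot n β ∧ β.1 = s ∧ t < β.2 ∧ ¬ PosUnder v β} →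
      (a, c) ∈ {η | IsPosRoot n η ∧ t ≤ η.2 ∧ PosUnder v η} ∪
      {β | IsPosRoot n β ∧ β.1 = s ∧ t < β.2 ∧ ¬ PosUnder v β} := by
    intro a b c hab hbc
    simp only [Set.mem_union, Set.mem_ofPred_eq, PosUnder, IsPosRoot] at *
    have h1 := hgap a c
    have h2 := hinj a c
    rcases hab with hab | ⟨hab, rfl, hab'⟩
    · rcases hbc with hbc | ⟨hbc, rfl, hbc'⟩
      · left; omega
      · left; omega
    · rcases hbc with hbc | hbc
      · rcases hbc.2.1.eq_or_lt with rfl | hlt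
        · left; omega
        · by_cases hac : v c < v a
          · left; omega
          · right; omega
      · omega
  constructor
  · rintro ⟨a, b⟩ h1 ⟨a', b'⟩ h2 γ (⟨rfl, rfl⟩ | ⟨rfl, rfl⟩)
    · exact hclosed _ _ _ h1 h2
    · exact hclosed _ _ _ h2 h1
  · rintro ⟨a, b⟩ h1 ⟨a', b'⟩ h2 γ (⟨h3, rfl⟩ | ⟨h3, rfl⟩) <;>
      simp only [Set.mem_ofPred_eq, PosUnder, IsPosRoot] at * <;> subst h3 <;> omega
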